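/- Let k ≥ 2, s ≥ 1 and r be integers with 0 < r < 2k, and set d = 2sk + r. Suppose that d·F(r/(2k), (d−2k+r)/d) + H(r/(2k)) < 0. Then for every δ > 0 there exists N₀ such that for every integer N ≥ N₀ with 2k ∣ N·d, the number of d-regular simple graphs G on the vertex set {1,…,N} with the following property is at least (1−δ) times the total number of d-regular simple graphs on {1,…,N}: for every partition {1,…,N} = A_s ⊔ A_{s+1} with |A_{s+1}| = r·N/(2k), the graph G admits a k-star decomposition with exactly s stars centered at every vertex of A_s and exactly s+1 stars centered at every vertex of A_{s+1}. -/

import Mathlib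

/-- A graph is `d`-regular: every vertex has exactly `d` neighbors. -/
def IsRegularGraph {V : Type*} (G : SimpleGraph V) (d : ℕ) : Prop :=
  ∀ v, (G.neighborSet v).ncard = d

/-- `G` has a decomposition of its edge set into `k`-stars with exactly `m v`
stars centered at each vertex `v`.  A star is recorded as a pair `(center, edges)`. -/
def HasStarDecomp {V : Type*} [DecidableEq V] (G : SimpleGraph V) (k : ℕ)
    (m : V → ℕ) : Prop :=
  ∃ S : Finset (V × Finset (Sym2 V)),
    (∀ p ∈ S, p.2.card = k ∧ (↑p.2 : Set (Sym2 V)) ⊆ G.edgeSet ∧ ∀ e ∈ p.2, p.1 ∈ e) ∧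
    (∀ e ∈ G.edgeSet, ∃! p, p ∈ S ∧ e ∈ p.2) ∧
    (∀ v, (S.filter fun p => p.1 = v).card = m v)

/-- `h x = -x log x` (with `h 0 = 0`, since `Real.log 0 = 0`). -/
noncomputable def entH (x : ℝ) : ℝ := -x * Real.log x

/-- `H x = h x + h (1 - x)`. -/
noncomputable def entHH (x : ℝ) : ℝ := entH x + entH (1 - x)

/-- The rate function `F(x,t)`. -/
noncomputable def entF (x t : ℝ) : ℝ :=
  (1 / 2) * entH (t * x) + entH ((1 - t) * x) + (1 / 2) * entH (1 - (2 - t) * x) - entHH x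

/-!
The edges of a graph split into prescribed numbers of `k`-stars unless, by Hall's theorem, some
vertex set spans too many edges. In a `d`-regular graph with `s` or `s + 1` stars at each vertex
this forces, whatever the set `A` of vertices with `s + 1` stars is, a set `W` of relative size at
most `r / (2 * k)` of average inner degree above `d - 2 * k + r`, or one of relative size at most
`1 - r / (2 * k)` of average inner degree above `d - r`.

Switching along 4-cycles with one edge inside `W` and the opposite edge outside compares the numbers
of regular graphs with `e` and `e - 1` edges in `W`; multiplying these ratios, the proportion of
graphs that keep a fraction `t` of the degrees of `W` inside `W` is at most a constant times
`exp (d * N * entF x t)` for `x = #W / N`. A union bound over `W` costs `exp (N * entHH x)`, so the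
sets of size `n = x * N` contribute at most `exp (n * χ x)` up to a factor linear in `n`, where
`χ x = (d * entF x t + entHH x) / x`. By Bernoulli's inequality `χ` is increasing on
`(0, r / (2 * k)]`, and it tends to `-∞` at `0`, so the hypothesis at `x = r / (2 * k)` controls all
smaller sets at once. The sets of the second kind are covered by the same hypothesis, because
passing to complements preserves `entF` and `entHH`.
-/

section PairCounts

open Finset SimpleGraph

variable {V : Type*} {G : SimpleGraph V} [DecidableRel G.Adj]

theorem card_interedges_comm (S T : Finset V) :
    #(G.interedges S T) = #(G.interedges T S) :=
  have := G.symm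
  Rel.card_interedges_comm S T

variable [Fintype V] {d : ℕ}

theorem isRegularGraph_iff_isRegularOfDegree : IsRegularGraph G d ↔ G.IsRegularOfDegree d := by
  simp only [IsRegularGraph, IsRegularOfDegree, Set.ncard_eq_toFinset_card', ← neighborFinset_def,
    card_neighborFinset_eq_degree]

theorem card_interedges_univ_right (hG : G.IsRegularOfDegree d) (S : Finset V) :
    #(G.interedges S univ) = d * #S := by
  classical
  have hfiber : ∀ v ∈ S, #(filter (fun w => G.Adj v w) univ) = d := fun v _ => by
    rw [← neighborFinset_eq_filter, card_neighborFinset_eq_degree, hG.degree_eq]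
  rw [SimpleGraph.interedges, Rel.interedges, card_filter, sum_product]
  simp only [← card_filter]
  rw [sum_congr rfl hfiber, sum_const, smul_eq_mul, mul_comm]

variable [DecidableEq V]

theorem card_interedges_add_compl (hG : G.IsRegularOfDegree d) (S T : Finset V) :
    #(G.interedges S T) + #(G.interedges S Tᶜ) = d * #S := by
  rw [← card_interedges_univ_right hG, ← card_union_of_disjoint
    (interedges_disjoint_right G S disjoint_compl_right)]
  congr 1
  ext ⟨v, w⟩
  simp only [mem_union, mk_mem_interedges_iff, mem_compl, mem_univ]
  tauto

theorem card_interedges_compl_compl (hG : G.IsRegularOfDegree d) (W : Finset V) :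
    #(G.interedges Wᶜ Wᶜ) + d * #W = d * #Wᶜ + #(G.interedges W W) := by
  have h₁ := card_interedges_add_compl hG W W
  have h₂ := card_interedges_add_compl hG Wᶜ W
  have h₃ := card_interedges_comm (G := G) Wᶜ W
  lia

end PairCounts

section Switching

open Finset SimpleGraph
open scoped symmDiff

variable {V : Type*}

/-- The 4-cycle `u v x y`.  Switching a graph along it means taking the symmetric difference. -/
def fourCycle (u v x y : V) : SimpleGraph V :=
  fromEdgeSet {s(u, v), s(v, x), s(x, y), s(y, u)}

theorem fourCycle_adj {u v x y a b : V} : (fourCycle u v x y).Adj a b ↔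
    (s(a, b) = s(u, v) ∨ s(a, b) = s(v, x) ∨ s(a, b) = s(x, y) ∨ s(a, b) = s(y, u)) ∧ a ≠ b := by
  simp only [fourCycle, fromEdgeSet_adj, Set.mem_insert_iff, Set.mem_singleton_iff]

theorem symmDiff_adj {G H : SimpleGraph V} {a b : V} :
    (G ∆ H).Adj a b ↔ G.Adj a b ∧ ¬H.Adj a b ∨ H.Adj a b ∧ ¬G.Adj a b :=
  Iff.rfl

theorem card_symmDiff_add_two_mul_card_inter [DecidableEq V] (s t : Finset V) :
    #(s ∆ t) + 2 * #(s ∩ t) = #s + #t := by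
  have hst := card_sdiff_add_card_inter s t
  have hts := card_sdiff_add_card_inter t s
  have h : #(s ∆ t) = #(s \ t) + #(t \ s) := card_union_of_disjoint disjoint_sdiff_sdiff
  rw [inter_comm t s] at hts
  lia

variable {G : SimpleGraph V} {u v x y : V}

theorem isRegularGraph_symmDiff_fourCycle [Finite V] {d : ℕ} (hG : IsRegularGraph G d)
    (huv : G.Adj u v) (hvx : Gᶜ.Adj v x) (hxy : G.Adj x y) (hyu : Gᶜ.Adj y u)
    (hux : u ≠ x) (hvy : v ≠ y) :
    IsRegularGraph (G ∆ fourCycle u v x y) d := by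
  classical
  have := Fintype.ofFinite V
  rw [isRegularGraph_iff_isRegularOfDegree] at hG ⊢
  rw [compl_adj] at hvx hyu
  intro z
  set C := fourCycle u v x y with hC
  have hnbr : (G ∆ C).neighborFinset z = G.neighborFinset z ∆ C.neighborFinset z := by
    ext w
    simp only [mem_neighborFinset, symmDiff_adj, mem_symmDiff]
  have hadj {w : V} : w ∈ C.neighborFinset z ↔ (fourCycle u v x y).Adj z w := by
    rw [mem_neighborFinset]
  have hbalanced : #(C.neighborFinset z) = 2 * #(G.neighborFinset z ∩ C.neighborFinset z) := by
    have hpair {a b : V} (ha : G.Adj z a) (hb : ¬G.Adj z b) (hz : C.neighborFinset z = {a, b}) :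
        #(C.neighborFinset z) = 2 * #(G.neighborFinset z ∩ C.neighborFinset z) := by
      have hab : a ≠ b := by rintro rfl; exact hb ha
      have hinter : G.neighborFinset z ∩ {a, b} = {a} := by
        ext w; simp only [mem_inter, mem_neighborFinset, mem_insert, mem_singleton]; grind
      rw [hz, hinter, card_pair hab, card_singleton]
    simp only [fourCycle_adj, Sym2.eq_iff] at hadj
    by_cases hz : z = u ∨ z = v ∨ z = x ∨ z = y
    · rcases hz with rfl | rfl | rfl | rfl
      · exact hpair huv (mt Adj.symm hyu.2) (by ext; grind [SimpleGraph.Adj.ne])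
      · exact hpair huv.symm hvx.2 (by ext; grind [SimpleGraph.Adj.ne])
      · exact hpair hxy (mt Adj.symm hvx.2) (by ext; grind [SimpleGraph.Adj.ne])
      · exact hpair hxy.symm hyu.2 (by ext; grind [SimpleGraph.Adj.ne])
    · rw [show C.neighborFinset z = ∅ by ext; grind, inter_empty, card_empty]
  have hcard := card_symmDiff_add_two_mul_card_inter (G.neighborFinset z) (C.neighborFinset z)
  rw [← hnbr, card_neighborFinset_eq_degree, card_neighborFinset_eq_degree, hG.degree_eq] at hcard
  lia

theorem card_interedges_symmDiff_fourCycle [DecidableRel G.Adj]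
    [DecidableRel (G ∆ fourCycle u v x y).Adj] {W : Finset V} (huv : G.Adj u v)
    (hu : u ∈ W) (hv : v ∈ W) (hx : x ∉ W) (hy : y ∉ W) :
    #((G ∆ fourCycle u v x y).interedges W W) + 2 = #(G.interedges W W) := by
  classical
  have hsdiff : (G ∆ fourCycle u v x y).interedges W W = G.interedges W W \ {(u, v), (v, u)} := by
    ext ⟨a, b⟩
    simp only [mk_mem_interedges_iff, symmDiff_adj, fourCycle_adj, Sym2.eq_iff, mem_sdiff,
      mem_insert, mem_singleton, Prod.mk.injEq]
    grind [SimpleGraph.adj_symm, SimpleGraph.Adj.ne]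
  have hsub : {(u, v), (v, u)} ⊆ G.interedges W W := by
    simp [insert_subset_iff, mk_mem_interedges_iff, *, huv.symm]
  rw [hsdiff, ← card_sdiff_add_card_eq_card hsub, card_pair (by simp [huv.ne])]

variable [Fintype V] [DecidableEq V]

open Classical in
/-- The finite set of `d`-regular graphs on `V`. -/
noncomputable def regularGraphs (V : Type*) [Fintype V] [DecidableEq V] (d : ℕ) :
    Finset (SimpleGraph V) :=
  {G | IsRegularGraph G d}

open Classical in
/-- The `d`-regular graphs with exactly `q` ordered pairs of adjacent vertices in `W`, that is,
with `q / 2` edges inside `W`. -/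
noncomputable def regularWith (d : ℕ) (W : Finset V) (q : ℕ) : Finset (SimpleGraph V) :=
  {G ∈ regularGraphs V d | #(G.interedges W W) = q}

theorem mem_regularGraphs {d : ℕ} : G ∈ regularGraphs V d ↔ IsRegularGraph G d := by
  simp only [regularGraphs, mem_filter, mem_univ, true_and]

theorem mem_regularWith [DecidableRel G.Adj] {d q : ℕ} {W : Finset V} :
    G ∈ regularWith d W q ↔ IsRegularGraph G d ∧ #(G.interedges W W) = q := by
  rw [regularWith, mem_filter, mem_regularGraphs]
  congr!

/-- The tuples `((u, v), (y, x))` such that switching `G` along the 4-cycle `u v x y` removes the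
edge `u v` inside `W` and the edge `x y` outside `W`. -/
def switchings (G : SimpleGraph V) [DecidableRel G.Adj] (W : Finset V) :
    Finset ((V × V) × (V × V)) :=
  {e ∈ G.interedges W W ×ˢ G.interedges Wᶜ Wᶜ | ¬G.Adj e.1.1 e.2.1 ∧ ¬G.Adj e.1.2 e.2.2}

theorem card_interedges_mul_le_card_switchings_add [DecidableRel G.Adj] {d : ℕ}
    (hG : G.IsRegularOfDegree d) (W : Finset V) :
    #(G.interedges W W) * #(G.interedges Wᶜ Wᶜ) ≤
      #(switchings G W) + #(G.interedges W W) * (2 * d ^ 2) := by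
  have hblocked : ∀ e ∈ G.interedges W W,
      #{f ∈ G.interedges Wᶜ Wᶜ | ¬(¬G.Adj e.1 f.1 ∧ ¬G.Adj e.2 f.2)} ≤ 2 * d ^ 2 := fun e _ => by
    calc _ ≤ #(G.interedges (G.neighborFinset e.1) univ ∪
          G.interedges univ (G.neighborFinset e.2)) := card_le_card fun f hf => by
            simp only [mem_filter, mem_interedges_iff, mem_union, mem_neighborFinset] at hf ⊢
            grind
      _ ≤ d * d + d * d := by
          refine (card_union_le _ _).trans_eq ?_
          rw [card_interedges_comm univ, card_interedges_univ_right hG,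
            card_interedges_univ_right hG, card_neighborFinset_eq_degree,
            card_neighborFinset_eq_degree, hG.degree_eq, hG.degree_eq]
      _ = 2 * d ^ 2 := by ring
  rw [← card_product, ← card_filter_add_card_filter_not
    (s := G.interedges W W ×ˢ G.interedges Wᶜ Wᶜ)
    fun e => ¬G.Adj e.1.1 e.2.1 ∧ ¬G.Adj e.1.2 e.2.2, switchings]
  gcongr
  rw [card_filter, sum_product]
  simp only [← card_filter]
  exact sum_le_card_nsmul _ _ _ hblocked

open Classical in
theorem sum_card_switchings_le (d q : ℕ) (W : Finset V) :
    ∑ G ∈ regularWith d W (q + 2), #(switchings G W) ≤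
      ∑ G ∈ regularWith d W q, #(G.interedges W Wᶜ) ^ 2 := by
  simp only [sq, ← card_product]
  rw [← card_sigma, ← card_sigma]
  refine card_le_card_of_injOn (fun p => ⟨p.1 ∆ fourCycle p.2.1.1 p.2.1.2 p.2.2.2 p.2.2.1,
    (p.2.1.1, p.2.2.1), (p.2.1.2, p.2.2.2)⟩) ?_ ?_
  · rintro ⟨G, ⟨u, v⟩, ⟨y, x⟩⟩ hp
    simp only [coe_sigma, Set.mem_sigma_iff, mem_coe, mem_regularWith, switchings, mem_filter,
      mem_product, mk_mem_interedges_iff, mem_compl] at hp ⊢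
    obtain ⟨⟨hG, hq⟩, ⟨⟨hu, hv, huv⟩, hy, hx, hyx⟩, huy, hvx⟩ := hp
    have hux : u ≠ x := ne_of_mem_of_not_mem hu hx
    have hvy : v ≠ y := ne_of_mem_of_not_mem hv hy
    have hvx' : Gᶜ.Adj v x := (G.compl_adj v x).2 ⟨ne_of_mem_of_not_mem hv hx, hvx⟩
    have hyu : Gᶜ.Adj y u :=
      (G.compl_adj y u).2 ⟨(ne_of_mem_of_not_mem hu hy).symm, mt Adj.symm huy⟩
    refine ⟨⟨isRegularGraph_symmDiff_fourCycle hG huv hvx' hyx.symm hyu hux hvy, ?_⟩,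
      ⟨hu, hy, ?_⟩, hv, hx, ?_⟩
    · exact Nat.add_right_cancel ((card_interedges_symmDiff_fourCycle huv hu hv hx hy).trans hq)
    · simp only [symmDiff_adj, fourCycle_adj]
      grind
    · simp only [symmDiff_adj, fourCycle_adj]
      grind
  · rintro ⟨G, ⟨u, v⟩, ⟨y, x⟩⟩ - ⟨G', ⟨u', v'⟩, ⟨y', x'⟩⟩ - h
    simp only [Sigma.mk.injEq, heq_eq_eq, Prod.mk.injEq] at h
    obtain ⟨hsymm, ⟨rfl, rfl⟩, rfl, rfl⟩ := h
    rw [symmDiff_left_injective _ hsymm]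

theorem card_regularWith_add_two_mul_le (d q : ℕ) (W : Finset V) :
    (#(regularWith d W (q + 2)) : ℝ) *
        ((q + 2) * (d * Fintype.card V - 2 * d * #W + (q + 2) - 2 * d ^ 2)) ≤
      #(regularWith d W q) * (d * #W - q) ^ 2 := by
  classical
  have hlower : ∀ G ∈ regularWith d W (q + 2),
      ((q + 2) * (d * Fintype.card V - 2 * d * #W + (q + 2) - 2 * d ^ 2) : ℝ) ≤
        #(switchings G W) := fun G hG => by
    rw [mem_regularWith, isRegularGraph_iff_isRegularOfDegree] at hG
    have hcompl := card_interedges_compl_compl hG.1 W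
    have hswitch := card_interedges_mul_le_card_switchings_add hG.1 W
    have hW := card_add_card_compl W
    rw [hG.2] at hcompl hswitch
    rify at hcompl hswitch hW
    rw [← hW]
    linear_combination hswitch - ((q : ℝ) + 2) * hcompl
  have hupper : ∀ G ∈ regularWith d W q, (#(G.interedges W Wᶜ) : ℝ) = d * #W - q := fun G hG => by
    rw [mem_regularWith, isRegularGraph_iff_isRegularOfDegree] at hG
    have h := card_interedges_add_compl hG.1 W W
    rw [hG.2] at h
    rify at h
    linarith
  calc _ ≤ ∑ G ∈ regularWith d W (q + 2), (#(switchings G W) : ℝ) := by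
        rw [← nsmul_eq_mul]; exact card_nsmul_le_sum _ _ _ hlower
    _ ≤ ∑ G ∈ regularWith d W q, (#(G.interedges W Wᶜ) : ℝ) ^ 2 :=
        mod_cast sum_card_switchings_le d q W
    _ = _ := by rw [sum_congr rfl fun G hG => by rw [hupper G hG], sum_const, nsmul_eq_mul]

end Switching

section StarDecomposition

open Finset SimpleGraph

variable {V : Type*} {G : SimpleGraph V} {k : ℕ} {m : V → ℕ}

section starOf

variable (f : G.edgeSet ≃ (Σ v, Fin (m v)) × Fin k) {z : Σ v, Fin (m v)}

/-- The star `z` of the decomposition encoded by `f`, where `f e = (⟨v, i⟩, j)` says that `e` is the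
`j`-th edge of the `i`-th star centered at `v`. -/
def starOf (z : Σ v, Fin (m v)) : V × Finset (Sym2 V) :=
  (z.1, univ.map ((Function.Embedding.sectR z (Fin k)).trans
    (f.symm.toEmbedding.trans (Function.Embedding.subtype _))))

theorem card_starOf : #(starOf f z).2 = k := by
  simp [starOf]

theorem mem_starOf {e : Sym2 V} :
    e ∈ (starOf f z).2 ↔ ∃ he : e ∈ G.edgeSet, (f ⟨e, he⟩).1 = z := by
  simp only [starOf, mem_map, mem_univ, true_and, Function.Embedding.trans_apply,
    Function.Embedding.sectR_apply, Equiv.coe_toEmbedding, Function.Embedding.subtype_apply]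
  constructor
  · rintro ⟨j, rfl⟩
    exact ⟨Subtype.coe_prop _, by simp⟩
  · rintro ⟨he, rfl⟩
    exact ⟨(f ⟨e, he⟩).2, by simp⟩

theorem starOf_injective (hk : 0 < k) : Function.Injective (starOf f) := fun z z' h => by
  obtain ⟨e, he⟩ : (starOf f z).2.Nonempty := card_pos.1 (by rwa [card_starOf])
  obtain ⟨_, rfl⟩ := (mem_starOf f).1 he
  obtain ⟨_, hz'⟩ := (mem_starOf f).1 (h ▸ he)
  exact hz'

end starOf

variable [DecidableEq V]

theorem hasStarDecomp_of_equiv [Finite V] (hk : 0 < k)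
    (f : G.edgeSet ≃ (Σ v, Fin (m v)) × Fin k)
    (hf : ∀ e : G.edgeSet, (f e).1.1 ∈ (e : Sym2 V)) : HasStarDecomp G k m := by
  have := Fintype.ofFinite V
  refine ⟨univ.map ⟨starOf f, starOf_injective f hk⟩, ?_, ?_, fun v => ?_⟩
  · simp only [mem_map, mem_univ, true_and, Function.Embedding.coeFn_mk, forall_exists_index,
      forall_apply_eq_imp_iff]
    refine fun z => ⟨card_starOf f, fun e he => ((mem_starOf f).1 he).1, fun e he => ?_⟩
    obtain ⟨_, rfl⟩ := (mem_starOf f).1 he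
    exact hf _
  · intro e he
    refine ⟨starOf f (f ⟨e, he⟩).1, ⟨by simp, (mem_starOf f).2 ⟨he, rfl⟩⟩, ?_⟩
    simp only [mem_map, mem_univ, true_and, Function.Embedding.coeFn_mk, and_imp,
      forall_exists_index]
    rintro _ z rfl hz
    obtain ⟨_, rfl⟩ := (mem_starOf f).1 hz
    rfl
  · have hcenter : univ.filter (fun z => (starOf f z).1 = v) =
        univ.map (Function.Embedding.sigmaMk v) := by
      ext ⟨w, i⟩
      rw [mem_filter_univ, mem_map]
      refine ⟨?_, fun ⟨_, _, h⟩ => (congrArg Sigma.fst h).symm⟩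
      rintro rfl
      exact ⟨i, mem_univ i, rfl⟩
    rw [filter_map, card_map]
    exact (congrArg card hcenter).trans (by simp)

variable [Fintype V]

/-- Hakimi's criterion: by Hall's theorem the edges can be assigned injectively to `k` slots per
star, every edge to a star centered at one of its ends. -/
theorem hasStarDecomp_of_card_edgeFinset_inter_sym2_le [DecidableRel G.Adj] (hk : 0 < k)
    (htotal : #G.edgeFinset = ∑ v, m v * k)
    (hle : ∀ U : Finset V, #(G.edgeFinset ∩ U.sym2) ≤ ∑ v ∈ U, m v * k) :
    HasStarDecomp G k m := by
  let slots (e : G.edgeSet) : Finset ((Σ v, Fin (m v)) × Fin k) := {z | z.1.1 ∈ (e : Sym2 V)}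
  have hhall (s : Finset G.edgeSet) : #s ≤ #(s.biUnion slots) := by
    let U : Finset V := {v | ∃ e ∈ s, v ∈ (e : Sym2 V)}
    have hslots : s.biUnion slots = (U.sigma fun _ => univ) ×ˢ univ := by ext; simp [slots, U]
    have hedges : s.map (Function.Embedding.subtype _) ⊆ G.edgeFinset ∩ U.sym2 := by
      intro e he
      obtain ⟨he', hes⟩ : ∃ he' : e ∈ G.edgeSet, ⟨e, he'⟩ ∈ s := by simpa using he
      simp only [mem_inter, mem_edgeFinset, mem_sym2_iff, U, mem_filter, mem_univ, true_and]
      exact ⟨he', fun v hv => ⟨_, hes, hv⟩⟩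
    calc #s = #(s.map (Function.Embedding.subtype _)) := (card_map _).symm
      _ ≤ ∑ v ∈ U, m v * k := (card_le_card hedges).trans (hle U)
      _ = #(s.biUnion slots) := by simp [hslots, sum_mul]
  obtain ⟨f, hf_inj, hf⟩ := (all_card_le_biUnion_card_iff_exists_injective slots).1 hhall
  have hcard : Fintype.card G.edgeSet = Fintype.card ((Σ v, Fin (m v)) × Fin k) := by
    rw [← edgeFinset_card, htotal]
    simp [sum_mul]
  have hf_bij := (Fintype.bijective_iff_injective_and_card f).2 ⟨hf_inj, hcard⟩
  exact hasStarDecomp_of_equiv hk (.ofBijective f hf_bij) fun e => by simpa [slots] using hf e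

theorem two_mul_card_edgeFinset_inter_sym2_le [DecidableRel G.Adj] (U : Finset V) :
    2 * #(G.edgeFinset ∩ U.sym2) ≤ #(G.interedges U U) := by
  let IsEnds (e : Sym2 V) (p : V × V) : Prop := s(p.1, p.2) = e
  have hends : ∀ e ∈ G.edgeFinset ∩ U.sym2,
      2 ≤ #((G.interedges U U).bipartiteAbove IsEnds e) := by
    intro e
    induction e with | _ a b
    intro he
    simp only [mem_inter, mem_edgeFinset, mem_edgeSet, mk_mem_sym2_iff] at he
    rw [← card_pair (a := (a, b)) (b := (b, a)) (by simp [he.1.ne])]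
    refine card_le_card ?_
    simp [insert_subset_iff, mem_bipartiteAbove, mk_mem_interedges_iff, he, he.1.symm, IsEnds]
  have hone : ∀ p ∈ G.interedges U U,
      #((G.edgeFinset ∩ U.sym2).bipartiteBelow IsEnds p) ≤ 1 := fun p _ =>
    card_le_one.2 fun e he e' he' =>
      ((mem_bipartiteBelow _).1 he).2.symm.trans ((mem_bipartiteBelow _).1 he').2
  simpa [mul_comm] using card_mul_le_card_mul IsEnds hends hone

end StarDecomposition

section DenseSets

open Finset SimpleGraph

variable {V : Type*}

open Classical in
/-- Some set `W` of at most `σ * |V|` vertices spans more than `b * |W| / 2` edges of `G`.  The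
count is over ordered pairs, which come in twos, and the excess over `b * |W|` is required to be at
least `2`. -/
def HasDenseSet [Fintype V] (G : SimpleGraph V) (b σ : ℝ) : Prop :=
  ∃ W : Finset V, #W ≤ σ * Fintype.card V ∧ b * #W + 2 ≤ #(G.interedges W W)

theorem sum_ite_add_one_mul [DecidableEq V] (A U : Finset V) (s k : ℕ) :
    ∑ v ∈ U, (if v ∈ A then s + 1 else s) * k = (s * #U + #(U ∩ A)) * k := by
  have hsplit (v : V) : (if v ∈ A then s + 1 else s) = s + if v ∈ A then 1 else 0 := by
    split_ifs <;> rfl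
  rw [← sum_mul]
  simp only [hsplit, sum_add_distrib, sum_const, smul_eq_mul, sum_ite_mem, mul_one, mul_comm s]

theorem hasStarDecomp_of_not_hasDenseSet [Fintype V] [DecidableEq V] {G : SimpleGraph V}
    {k s r d : ℕ} (hk : 0 < k) (hd : d = 2 * s * k + r) (hG : IsRegularGraph G d)
    (hsmall : ¬HasDenseSet G (d - 2 * k + r) (r / (2 * k)))
    (hlarge : ¬HasDenseSet G (d - r) (1 - r / (2 * k)))
    {A : Finset V} (hA : #A * (2 * k) = r * Fintype.card V) :
    HasStarDecomp G k fun v => if v ∈ A then s + 1 else s := by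
  classical
  rw [isRegularGraph_iff_isRegularOfDegree] at hG
  have hk' : (0 : ℝ) < k := by exact_mod_cast hk
  have hσ : (r : ℝ) / (2 * k) * Fintype.card V = #A := by
    rify at hA
    field_simp
    linarith
  apply hasStarDecomp_of_card_edgeFinset_inter_sym2_le hk
  · have hedges := G.sum_degrees_eq_twice_card_edges
    simp only [hG.degree_eq, sum_const, card_univ, smul_eq_mul] at hedges
    rw [sum_ite_add_one_mul, univ_inter, card_univ]
    subst hd
    linarith
  · intro U
    rw [sum_ite_add_one_mul]
    suffices h : #(G.interedges U U) < 2 * ((s * #U + #(U ∩ A)) * k) + 2 by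
      have := two_mul_card_edgeFinset_inter_sym2_le (G := G) U
      lia
    unfold HasDenseSet at hsmall hlarge
    push Not at hsmall hlarge
    have hU : #U + #Uᶜ = Fintype.card V := card_add_card_compl U
    have hUA : #A ≤ #(U ∩ A) + #Uᶜ := by
      rw [← card_inter_add_card_sdiff A U, inter_comm]
      gcongr
      exact fun v hv => mem_compl.2 (mem_sdiff.1 hv).2
    have hcompl := card_interedges_compl_compl hG Uᶜ
    rw [compl_compl] at hcompl
    rify at hU hUA hcompl hA ⊢
    rw [hd] at *
    push_cast at *
    rcases le_or_gt (#U : ℝ) ((1 - r / (2 * k)) * Fintype.card V) with hle | hgt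
    · have := hlarge U hle
      nlinarith
    · have := hsmall Uᶜ (by linarith)
      nlinarith

end DenseSets

section Entropy

open Real Set Filter Topology

theorem entHH_one_sub (x : ℝ) : entHH (1 - x) = entHH x := by
  rw [entHH, entHH, sub_sub_cancel, add_comm]

theorem entH_le_tangent {a b : ℝ} (ha : 0 < a) (hb : 0 ≤ b) :
    entH b ≤ entH a + (b - a) * (-log a - 1) := by
  rw [entH, entH]
  rcases hb.eq_or_lt with rfl | hb
  · simp only [log_zero]
    linarith
  · have hlog := mul_le_mul_of_nonneg_left (log_le_sub_one_of_pos (div_pos ha hb)) hb.le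
    rw [log_div ha.ne' hb.ne', mul_sub, mul_sub, mul_div_cancel₀ _ hb.ne'] at hlog
    linarith

theorem neg_mul_log_sub_le_entH {p q : ℝ} (hp : 0 ≤ p) (hq : 0 < q) :
    -p * log q - p * (p / q - 1) ≤ entH p := by
  rw [entH]
  rcases hp.eq_or_lt with rfl | hp
  · simp
  · have hlog := mul_le_mul_of_nonneg_left (log_le_sub_one_of_pos (div_pos hp hq)) hp.le
    rw [log_div hp.ne' hq.ne'] at hlog
    linarith

theorem mul_log_two_le_entHH {x : ℝ} (hx0 : 0 < x) (hx : x ≤ 1 / 2) : x * log 2 ≤ entHH x := by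
  have hlog : log x ≤ -log 2 := by
    rw [← log_inv]
    exact log_le_log hx0 (by linarith)
  have hrest : 0 ≤ entH (1 - x) := negMulLog_nonneg (by linarith) (by linarith)
  rw [entHH, entH]
  nlinarith

/-- The slope of `u ↦ entF x u` at `t`, in units of `x / 2`. -/
noncomputable def entFSlope (x t : ℝ) : ℝ :=
  2 * log ((1 - t) * x) - log (t * x) - log (1 - (2 - t) * x)

theorem one_sub_two_sub_mul_pos {x t : ℝ} (hx : x ∈ Ioo 0 1) (ht : x ≤ t) :
    0 < 1 - (2 - t) * x := by
  nlinarith [sq_pos_of_pos (sub_pos.2 hx.2), hx.1]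

theorem exp_entFSlope {x t : ℝ} (hx : x ∈ Ioo 0 1) (ht : t ∈ Ico x 1) :
    exp (entFSlope x t) = ((1 - t) * x) ^ 2 / (t * x * (1 - (2 - t) * x)) := by
  have hin : 0 < t * x := mul_pos (hx.1.trans_le ht.1) hx.1
  have hcross : 0 < (1 - t) * x := mul_pos (sub_pos.2 ht.2) hx.1
  have hout : 0 < 1 - (2 - t) * x := one_sub_two_sub_mul_pos hx ht.1
  rw [entFSlope, exp_sub, exp_sub, exp_log hin, exp_log hout, div_div, two_mul, exp_add,
    exp_log hcross, sq]

theorem entFSlope_nonpos {x t : ℝ} (hx : x ∈ Ioo 0 1) (ht : t ∈ Ico x 1) : entFSlope x t ≤ 0 := by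
  have hin : 0 < t * x := mul_pos (hx.1.trans_le ht.1) hx.1
  have hout : 0 < 1 - (2 - t) * x := one_sub_two_sub_mul_pos hx ht.1
  rw [← exp_le_one_iff, exp_entFSlope hx ht, div_le_one (mul_pos hin hout)]
  nlinarith [mul_nonneg hx.1.le (sub_nonneg.2 ht.1)]

theorem entF_le_tangent {x t u : ℝ} (hx : x ∈ Ioo 0 1) (ht : t ∈ Ico x 1) (hu : u ∈ Icc x 1) :
    entF x u ≤ entF x t + (u - t) * (x / 2) * entFSlope x t := by
  have hin := entH_le_tangent (mul_pos (hx.1.trans_le ht.1) hx.1)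
    (mul_nonneg (hx.1.le.trans hu.1) hx.1.le)
  have hcross := entH_le_tangent (mul_pos (sub_pos.2 ht.2) hx.1)
    (mul_nonneg (sub_nonneg.2 hu.2) hx.1.le)
  have hout := entH_le_tangent (one_sub_two_sub_mul_pos hx ht.1)
    (one_sub_two_sub_mul_pos hx hu.1).le
  rw [entF, entF, entFSlope]
  linarith

theorem antitoneOn_entF {x : ℝ} (hx : x ∈ Ioo 0 1) : AntitoneOn (entF x) (Icc x 1) := by
  intro t ht u hu htu
  rcases htu.eq_or_lt with rfl | htu
  · rfl
  have ht' : t ∈ Ico x 1 := ⟨ht.1, htu.trans_le hu.2⟩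
  have hdrop : (u - t) * (x / 2) * entFSlope x t ≤ 0 :=
    mul_nonpos_of_nonneg_of_nonpos (mul_nonneg (sub_nonneg.2 htu.le) (half_pos hx.1).le)
      (entFSlope_nonpos hx ht')
  linarith [entF_le_tangent hx ht' hu]

theorem entF_self {x : ℝ} (hx : x ∈ Ioo 0 1) : entF x x = 0 := by
  have hlog : log (1 - (2 - x) * x) = 2 * log (1 - x) := by
    rw [show 1 - (2 - x) * x = (1 - x) ^ 2 by ring, log_pow, Nat.cast_ofNat]
  rw [entF, entHH, entH, entH, entH, entH, entH, hlog, log_mul hx.1.ne' hx.1.ne',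
    log_mul (sub_pos.2 hx.2).ne' hx.1.ne']
  ring

theorem entF_one_sub {x t u : ℝ} (h : u * (1 - x) = 1 - (2 - t) * x) :
    entF (1 - x) u = entF x t := by
  have hcross : (1 - u) * (1 - x) = (1 - t) * x := by linarith
  have hout : 1 - (2 - u) * (1 - x) = t * x := by linarith
  rw [entF, entF, h, hcross, hout, entHH_one_sub]
  ring

/-- `-2 * entF x t` is the relative entropy of an edge's end types with respect to independent
ends, which is at most the corresponding `χ²`-divergence. -/
theorem neg_sq_div_two_le_entF {x t : ℝ} (hx : x ∈ Ioo 0 1) (ht : t ∈ Icc 0 1)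
    (hout : 0 ≤ 1 - (2 - t) * x) : -((t - x) / (1 - x)) ^ 2 / 2 ≤ entF x t := by
  have hx1 : 0 < 1 - x := sub_pos.2 hx.2
  have hx0 : 0 < x := hx.1
  have h₁ := neg_mul_log_sub_le_entH (mul_nonneg ht.1 hx.1.le) (mul_pos hx.1 hx.1)
  have h₂ := neg_mul_log_sub_le_entH (mul_nonneg (sub_nonneg.2 ht.2) hx.1.le) (mul_pos hx.1 hx1)
  have h₃ := neg_mul_log_sub_le_entH hout (mul_pos hx1 hx1)
  rw [log_mul hx.1.ne' hx.1.ne'] at h₁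
  rw [log_mul hx.1.ne' hx1.ne'] at h₂
  rw [log_mul hx1.ne' hx1.ne'] at h₃
  have hchi : t * x * (t * x / (x * x) - 1) + 2 * ((1 - t) * x * ((1 - t) * x / (x * (1 - x)) - 1))
      + (1 - (2 - t) * x) * ((1 - (2 - t) * x) / ((1 - x) * (1 - x)) - 1)
      = ((t - x) / (1 - x)) ^ 2 := by
    field_simp
    ring
  rw [entF, entHH, entH.eq_1 x, entH.eq_1 (1 - x)]
  linarith

/-- The exponential growth rate in `N` of the expected number of vertex sets of size `x * N` in a
uniformly random `d`-regular graph on `N` vertices that keep a proportion `t` of their degree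
inside. -/
noncomputable def momentRate (d t x : ℝ) : ℝ := d * entF x t + entHH x

theorem momentRate_one_sub {d x t u : ℝ} (h : u * (1 - x) = 1 - (2 - t) * x) :
    momentRate d u (1 - x) = momentRate d t x := by
  rw [momentRate, momentRate, entF_one_sub h, entHH_one_sub]

theorem momentRate_div_eq {d t x : ℝ} (hx : 0 < x) :
    momentRate d t x / x = (d * t / 2 - 1) * log x + (d / 2 * entH t + d * entH (1 - t)) +
      (d / 2 * entH (1 - (2 - t) * x) - (d - 1) * entH (1 - x)) / x := by
  have hin : entH (t * x) = x * entH t + t * entH x := negMulLog_mul t x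
  have hcross : entH ((1 - t) * x) = x * entH (1 - t) + (1 - t) * entH x := negMulLog_mul (1 - t) x
  rw [momentRate, entF, entHH, hin, hcross, entH.eq_1 x]
  field_simp
  ring

theorem mul_log_one_sub_le {d t x : ℝ} (hd : 2 ≤ d) (hx : x ∈ Ioo 0 1)
    (hxt : 2 * (1 - x) ≤ d * (t - x)) :
    (d - 1) * log (1 - x) ≤ d / 2 * log (1 - (2 - t) * x) := by
  have hx0 : 0 < x := hx.1
  have hx1 : 0 < 1 - x := sub_pos.2 hx.2
  have htx : 0 < t - x := pos_of_mul_pos_right (by linarith) (by linarith : 0 ≤ d)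
  have hy : 0 < x * (t - x) / (1 - x) ^ 2 := by positivity
  have hbernoulli : 1 + d / 2 * (x * (t - x) / (1 - x) ^ 2) ≤
      (1 + x * (t - x) / (1 - x) ^ 2) ^ (d / 2) :=
    one_add_mul_self_le_rpow_one_add (by linarith) (by linarith)
  have hone : 1 ≤ (1 - x) * (1 + x * (t - x) / (1 - x) ^ 2) ^ (d / 2) := by
    refine le_trans ?_ (mul_le_mul_of_nonneg_left hbernoulli hx1.le)
    have hexpand : (1 - x) * (1 + d / 2 * (x * (t - x) / (1 - x) ^ 2)) =
        1 + x * ((d * (t - x) - 2 * (1 - x)) / (2 * (1 - x))) := by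
      field_simp
      ring
    rw [hexpand, le_add_iff_nonneg_right]
    exact mul_nonneg hx0.le (div_nonneg (sub_nonneg.2 hxt) (by positivity))
  have hlog := log_nonneg hone
  rw [log_mul hx1.ne' (by positivity), log_rpow (by positivity)] at hlog
  have hfactor : 1 - (2 - t) * x = (1 - x) ^ 2 * (1 + x * (t - x) / (1 - x) ^ 2) := by
    field_simp
    ring
  rw [hfactor, log_mul (by positivity) (by positivity), log_pow, Nat.cast_ofNat]
  linarith

theorem hasDerivAt_entH_one_sub_mul {c x : ℝ} (h : 1 - c * x ≠ 0) :
    HasDerivAt (fun y => entH (1 - c * y)) (c * (log (1 - c * x) + 1)) x := by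
  have hlin : HasDerivAt (fun y : ℝ => 1 - c * y) (-c) x := by
    simpa using ((hasDerivAt_id x).const_mul c).const_sub 1
  refine ((hasDerivAt_negMulLog h).comp x hlin).congr_deriv ?_
  ring

theorem hasDerivAt_momentRate_div {d t x : ℝ} (hx : x ∈ Ioo 0 1) (hout : 1 - (2 - t) * x ≠ 0) :
    HasDerivAt (fun y => momentRate d t y / y)
      ((d / 2 * log (1 - (2 - t) * x) - (d - 1) * log (1 - x)) / x ^ 2) x := by
  have hx0 : x ≠ 0 := hx.1.ne'
  have hx1 : HasDerivAt (fun y => entH (1 - y)) (log (1 - x) + 1) x := by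
    simpa using hasDerivAt_entH_one_sub_mul (c := 1) (x := x) (by linarith [hx.2])
  have hlog := ((hasDerivAt_log hx0).const_mul (d * t / 2 - 1)).add_const
    (d / 2 * entH t + d * entH (1 - t))
  have hquot := (((hasDerivAt_entH_one_sub_mul hout).const_mul (d / 2)).sub
    (hx1.const_mul (d - 1))).div (hasDerivAt_id x) hx0
  refine ((hlog.add hquot).congr_of_eventuallyEq ?_).congr_deriv ?_
  · filter_upwards [lt_mem_nhds hx.1] with y hy
    exact momentRate_div_eq hy
  · simp only [Pi.sub_apply, id, entH]
    field_simp
    ring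

theorem monotoneOn_momentRate_div {d t σ : ℝ} (hd : 2 ≤ d) (hσ : σ < 1)
    (hσt : 2 * (1 - σ) ≤ d * (t - σ)) :
    MonotoneOn (fun x => momentRate d t x / x) (Ioc 0 σ) := by
  have hmem {x : ℝ} (hx : x ∈ Ioc 0 σ) : x ∈ Ioo 0 1 := ⟨hx.1, hx.2.trans_lt hσ⟩
  have hcond {x : ℝ} (hx : x ∈ Ioc 0 σ) : 2 * (1 - x) ≤ d * (t - x) := by nlinarith [hx.2]
  have hderiv {x : ℝ} (hx : x ∈ Ioc 0 σ) := by
    refine hasDerivAt_momentRate_div (d := d) (t := t) (hmem hx)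
      (one_sub_two_sub_mul_pos (hmem hx) ?_).ne'
    nlinarith [hcond hx, (hmem hx).2]
  refine monotoneOn_of_deriv_nonneg (convex_Ioc 0 σ)
    (fun x hx => (hderiv hx).continuousAt.continuousWithinAt)
    (fun x hx => (hderiv (interior_subset hx)).differentiableAt.differentiableWithinAt)
    fun x hx => ?_
  replace hx := interior_subset hx
  rw [(hderiv hx).deriv]
  exact div_nonneg (sub_nonneg.2 (mul_log_one_sub_le hd (hmem hx) (hcond hx))) (sq_nonneg x)

theorem tendsto_momentRate_div_atBot {d t : ℝ} (hdt : 2 < d * t) :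
    Tendsto (fun x => momentRate d t x / x) (𝓝[>] 0) atBot := by
  have hone : HasDerivAt (fun y => entH (1 - y)) 1 0 := by
    simpa using hasDerivAt_entH_one_sub_mul (c := 1) (x := 0) (by simp)
  have hdiff := ((hasDerivAt_entH_one_sub_mul (c := 2 - t) (x := 0) (by simp)).const_mul
    (d / 2)).sub (hone.const_mul (d - 1))
  have hslope := hdiff.tendsto_slope_zero_right
  have hlog := (tendsto_log_nhdsGT_zero.const_mul_atBot (by linarith : 0 < d * t / 2 - 1)).atBot_add
    (tendsto_const_nhds (x := d / 2 * entH t + d * entH (1 - t)))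
  refine (hlog.atBot_add hslope).congr' ?_
  filter_upwards [self_mem_nhdsWithin] with x hx
  rw [momentRate_div_eq hx]
  simp [entH, div_eq_inv_mul]

end Entropy

section LargeDeviation

open Real Finset SimpleGraph

/-- Going back one step `2 / c` in `htangent` gives `f (u - 2 / c) + g u ≤ f u`, so the exponents in
`hstep` telescope to `f`. -/
theorem le_mul_exp_of_tangent {a : ℕ → ℝ} {f g : ℝ → ℝ} {T κ c m : ℝ} (hc : 0 < c) (hm : 0 ≤ m)
    (hκ : 0 ≤ κ) (hT : 0 ≤ T) (ha : ∀ q, a q ≤ T) (hfm : 0 ≤ f m) (hg : ∀ u ∈ Set.Ico m 1, g u ≤ 0)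
    (htangent : ∀ u ∈ Set.Ico m 1, ∀ v ∈ Set.Icc m 1, f v ≤ f u + (v - u) * (c / 2) * g u)
    (hstep : ∀ q : ℕ, q / c ∈ Set.Ico m 1 → a (q + 2) ≤ a q * exp (g (q / c) + κ))
    {q : ℕ} (hq : q / c ∈ Set.Ico m 1) : a (q + 2) ≤ T * exp (f (q / c) + κ * (q + 2)) := by
  induction q using Nat.strong_induction_on with
  | _ q ih =>
    refine (hstep q hq).trans ?_
    have hgq := hg _ hq
    obtain hprev | hprev := le_or_gt (m * c + 2) q
    · obtain ⟨p, rfl⟩ : ∃ p, q = p + 2 := by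
        refine ⟨q - 2, (Nat.sub_add_cancel ?_).symm⟩
        exact_mod_cast (by nlinarith : (2 : ℝ) ≤ q)
      have hqp : ((p + 2 : ℕ) : ℝ) / c = p / c + 2 / c := by push_cast; ring
      have hp : p / c ∈ Set.Ico m 1 := by
        refine ⟨(le_div_iff₀ hc).2 (by push_cast at hprev; linarith), ?_⟩
        linarith [hq.2, div_pos two_pos hc]
      have htan := htangent _ hq _ ⟨hp.1, hp.2.le⟩
      have hdiff : (p / c - (p + 2 : ℕ) / c) * (c / 2) = -1 := by rw [hqp]; field_simp; ring
      rw [hdiff] at htan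
      calc a (p + 2) * exp (g ((p + 2 : ℕ) / c) + κ)
          ≤ T * exp (f (p / c) + κ * (p + 2)) * exp (g ((p + 2 : ℕ) / c) + κ) := by
            gcongr
            exact ih p (by lia) hp
        _ ≤ T * exp (f ((p + 2 : ℕ) / c) + κ * ((p + 2 : ℕ) + 2)) := by
            rw [mul_assoc, ← exp_add]
            gcongr T * exp ?_
            push_cast at htan ⊢
            linarith
    · refine mul_le_mul (ha q) (exp_le_exp.2 ?_) (exp_pos _).le hT
      have htan := htangent _ hq m ⟨le_rfl, hq.1.trans hq.2.le⟩
      have hdiff : -1 ≤ (m - q / c) * (c / 2) := by field_simp; linarith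
      nlinarith [q.cast_nonneg (α := ℝ)]

variable {V : Type*} [Fintype V] [DecidableEq V] {d q : ℕ} {W : Finset V} {x t : ℝ}

theorem card_regularWith_le (d : ℕ) (W : Finset V) (q : ℕ) :
    #(regularWith d W q) ≤ #(regularGraphs V d) :=
  card_le_card (filter_subset _ _)

theorem regularWith_eq_empty (hq : d * #W < q) : regularWith d W q = ∅ := by
  classical
  refine filter_eq_empty_iff.2 fun G hG hGq => hq.not_ge ?_
  rw [mem_regularGraphs, isRegularGraph_iff_isRegularOfDegree] at hG
  rw [← hGq, ← card_interedges_univ_right hG W]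
  exact card_le_card (interedges_mono _ subset_rfl (subset_univ W))

theorem le_exp_mul_sub {z κ E : ℝ} (hE : 0 ≤ E) (hκ : κ ≤ 1) (hz : 2 * z ≤ κ * E) (hz0 : 0 ≤ z) :
    E ≤ exp κ * (E - z) := by
  have hzE : z ≤ E := by nlinarith
  calc E ≤ (κ + 1) * (E - z) := by nlinarith
    _ ≤ exp κ * (E - z) := by
      exact mul_le_mul_of_nonneg_right (add_one_le_exp κ) (sub_nonneg.2 hzE)

theorem outer_le_exp_mul_outer_sub {D N : ℝ} (hD : 0 < D) (hx : x ∈ Set.Ioo 0 1) (hxt : x ≤ t)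
    (hN : 4 * D ≤ (1 - x) ^ 2 * N) :
    D * N * (1 - (2 - t) * x) ≤
      exp (4 * D / ((1 - x) ^ 2 * N)) * (D * N * (1 - (2 - t) * x) - 2 * D ^ 2) := by
  have hNx : 0 < (1 - x) ^ 2 * N := by linarith
  have hN0 : 0 < N := pos_of_mul_pos_right hNx (sq_nonneg _)
  have hout : 0 < 1 - (2 - t) * x := one_sub_two_sub_mul_pos hx hxt
  refine le_exp_mul_sub (by positivity) (div_le_one_of_le₀ hN hNx.le) ?_ (by positivity)
  calc 2 * (2 * D ^ 2) = 4 * D / ((1 - x) ^ 2 * N) * (D * N * (1 - x) ^ 2) := by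
        linear_combination -D * div_mul_cancel₀ (4 * D) hNx.ne'
    _ ≤ 4 * D / ((1 - x) ^ 2 * N) * (D * N * (1 - (2 - t) * x)) := by
        gcongr
        linarith [mul_nonneg hx.1.le (sub_nonneg.2 hxt)]

theorem card_regularWith_add_two_le_mul_exp (hd : 0 < d) (hx : x ∈ Set.Ioo 0 1)
    (hW : (#W : ℝ) = x * Fintype.card V) (hV : 4 * d ≤ (1 - x) ^ 2 * Fintype.card V)
    (ht : t ∈ Set.Ico x 1) (hq : (q : ℝ) = t * (d * #W)) :
    (#(regularWith d W (q + 2)) : ℝ) ≤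
      #(regularWith d W q) * exp (entFSlope x t + 4 * d / ((1 - x) ^ 2 * Fintype.card V)) := by
  have hd0 : (0 : ℝ) < d := by exact_mod_cast hd
  have hin : 0 < t * x := mul_pos (hx.1.trans_le ht.1) hx.1
  have hout : 0 < 1 - (2 - t) * x := one_sub_two_sub_mul_pos hx ht.1
  have hswitch := card_regularWith_add_two_mul_le d q W
  rw [hW] at hq hswitch
  generalize (Fintype.card V : ℝ) = N at *
  have hNx : 0 < (1 - x) ^ 2 * N := by linarith
  have hN : 0 < N := pos_of_mul_pos_right hNx (sq_nonneg _)
  set κ : ℝ := 4 * d / ((1 - x) ^ 2 * N)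
  set E : ℝ := d * N * (1 - (2 - t) * x) with hE
  have hEκ : E ≤ exp κ * (E - 2 * d ^ 2) := outer_le_exp_mul_outer_sub hd0 hx ht.1 hV
  have hE1 : 0 < E - 2 * d ^ 2 :=
    pos_of_mul_pos_right ((by positivity : 0 < E).trans_le hEκ) (exp_pos κ).le
  have hcross : (d * (x * N) - q) ^ 2 = exp (entFSlope x t) * (q * E) := by
    have hslope := div_mul_cancel₀ (((1 - t) * x) ^ 2) (mul_pos hin hout).ne'
    rw [← exp_entFSlope hx ht] at hslope
    rw [hq, hE]
    linear_combination (-(d * N) ^ 2 : ℝ) * hslope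
  have hpos : 0 < ((q : ℝ) + 2) * (E - 2 * d ^ 2 + 2) := by positivity
  refine le_of_mul_le_mul_right ?_ hpos
  calc (#(regularWith d W (q + 2)) : ℝ) * ((q + 2) * (E - 2 * d ^ 2 + 2))
      ≤ #(regularWith d W q) * (d * (x * N) - q) ^ 2 := by
        refine le_of_eq_of_le ?_ hswitch
        rw [hE, hq]
        ring
    _ ≤ #(regularWith d W q) * (exp (entFSlope x t) *
          ((q + 2) * (exp κ * (E - 2 * d ^ 2 + 2)))) := by
        rw [hcross]
        gcongr
        · linarith
        · linarith [exp_pos κ]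
    _ = _ := by
        rw [exp_add]
        ring

theorem card_regularWith_add_two_le (hd : 0 < d) (hx : x ∈ Set.Ioo 0 1)
    (hW : (#W : ℝ) = x * Fintype.card V) (hV : 4 * d ≤ (1 - x) ^ 2 * Fintype.card V)
    (hq : q / (d * #W : ℝ) ∈ Set.Ico x 1) :
    (#(regularWith d W (q + 2)) : ℝ) ≤ #(regularGraphs V d) *
      exp (d * Fintype.card V * entF x (q / (d * #W)) +
        4 * d / ((1 - x) ^ 2 * Fintype.card V) * (q + 2)) := by
  have hd0 : (0 : ℝ) < d := by exact_mod_cast hd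
  have hN : 0 < (Fintype.card V : ℝ) :=
    pos_of_mul_pos_right (by linarith : 0 < (1 - x) ^ 2 * _) (sq_nonneg _)
  have hc : 0 < (d * #W : ℝ) := mul_pos hd0 (hW ▸ mul_pos hx.1 hN)
  refine le_mul_exp_of_tangent (a := fun q => #(regularWith d W q))
    (f := fun u => d * Fintype.card V * entF x u) (g := entFSlope x) hc hx.1.le (by positivity)
    (Nat.cast_nonneg _) (fun q => Nat.cast_le.2 (card_regularWith_le d W q))
    (by simp [entF_self hx]) (fun u => entFSlope_nonpos hx) (fun u hu v hv => ?_)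
    (fun q hq => card_regularWith_add_two_le_mul_exp hd hx hW hV hq
      (div_mul_cancel₀ _ hc.ne').symm) hq
  rw [hW]
  nlinarith [entF_le_tangent hx hu hv, mul_pos hd0 hN]

theorem card_regularWith_le_mul_exp (hx : x ∈ Set.Ioo 0 1)
    (hW : (#W : ℝ) = x * Fintype.card V) (hV : 4 * d ≤ (1 - x) ^ 2 * Fintype.card V)
    (ht : t ∈ Set.Icc x 1) (hq : t * (d * #W) + 2 ≤ q) :
    (#(regularWith d W q) : ℝ) ≤ #(regularGraphs V d) *
      exp (4 * d ^ 2 / (1 - x) ^ 2 + d * Fintype.card V * entF x t) := by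
  obtain hlt | hqd := lt_or_ge (d * #W) q
  · rw [regularWith_eq_empty hlt, card_empty, Nat.cast_zero]
    positivity
  have hx0 : 0 < x := hx.1
  have ht0 : 0 < t := hx0.trans_le ht.1
  obtain ⟨p, rfl⟩ : ∃ p, q = p + 2 := by
    refine ⟨q - 2, (Nat.sub_add_cancel ?_).symm⟩
    have : 0 ≤ t * (d * #W) := by positivity
    exact_mod_cast (by linarith : (2 : ℝ) ≤ q)
  have hd : 0 < d := Nat.pos_of_mul_pos_right (by lia : 0 < d * #W)
  have hc : (0 : ℝ) < d * #W := by exact_mod_cast (by lia : 0 < d * #W)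
  rify at hqd
  push_cast at hq
  have hp : p / (d * #W : ℝ) ∈ Set.Ico t 1 := by
    rw [Set.mem_Ico, le_div_iff₀ hc, div_lt_one hc]
    constructor <;> linarith
  refine (card_regularWith_add_two_le hd hx hW hV ⟨ht.1.trans hp.1, hp.2⟩).trans ?_
  have herror : 4 * d / ((1 - x) ^ 2 * Fintype.card V) * (p + 2) ≤ 4 * d ^ 2 / (1 - x) ^ 2 := by
    have hd0 : (0 : ℝ) < d := by exact_mod_cast hd
    have hN : 0 < (Fintype.card V : ℝ) :=
      pos_of_mul_pos_right (by linarith : 0 < (1 - x) ^ 2 * _) (sq_nonneg _)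
    calc 4 * d / ((1 - x) ^ 2 * Fintype.card V) * (p + 2)
        ≤ 4 * d / ((1 - x) ^ 2 * Fintype.card V) * (d * Fintype.card V) := by
          gcongr
          refine hqd.trans ?_
          gcongr
          exact card_le_univ W
      _ = 4 * d ^ 2 / (1 - x) ^ 2 := by field_simp
  rw [add_comm (4 * (d : ℝ) ^ 2 / _)]
  gcongr
  exact antitoneOn_entF hx ht ⟨ht.1.trans hp.1, hp.2.le⟩ hp.1

end LargeDeviation

section FirstMoment

open Real Finset SimpleGraph Filter Topology

variable {V : Type*} [Fintype V] [DecidableEq V] {d : ℕ} {t σ : ℝ}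

theorem choose_le_exp_entHH {N n : ℕ} (hn : 0 < n) (hnN : n < N) :
    (N.choose n : ℝ) ≤ exp (N * entHH (n / N)) := by
  have hN : (0 : ℝ) < N := by exact_mod_cast hn.trans hnN
  set x : ℝ := n / N with hx
  have hx0 : 0 < x := by positivity
  have hx1 : 0 < 1 - x := by
    rw [sub_pos, hx, div_lt_one hN]
    exact_mod_cast hnN
  have hbinomial : x ^ n * (1 - x) ^ (N - n) * (N.choose n : ℝ) ≤ 1 := by
    have hsum := add_pow x (1 - x) N
    rw [add_sub_cancel, one_pow] at hsum
    refine le_trans ?_ hsum.ge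
    exact single_le_sum (f := fun m => x ^ m * (1 - x) ^ (N - m) * (N.choose m : ℝ))
      (fun m _ => by positivity) (mem_range.2 (hnN.trans N.lt_succ_self))
  have hexp : x ^ n * (1 - x) ^ (N - n) = exp (-(N * entHH x)) := by
    rw [← exp_log (pow_pos hx0 n), ← exp_log (pow_pos hx1 _), ← exp_add, log_pow, log_pow,
      Nat.cast_sub hnN.le, entHH, entH, entH, (div_mul_cancel₀ (n : ℝ) hN.ne').symm]
    congr 1
    ring
  rw [hexp, exp_neg, inv_mul_le_iff₀ (exp_pos _), mul_one] at hbinomial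
  exact hbinomial

theorem tendsto_sum_mul_exp_nhds_zero {χ : ℝ → ℝ} {c η : ℝ} (hc : 0 ≤ c) (hσ : σ ≤ 1)
    (hη : 0 < η) (hχ : ∀ x ∈ Set.Ioc 0 σ, χ x ≤ -η) (hχ0 : Tendsto χ (𝓝[>] 0) atBot) :
    Tendsto (fun N : ℕ => ∑ n ∈ range (N + 1),
      if 0 < n ∧ n ≤ σ * N then (c * n + 1) * exp (n * χ (n / N)) else 0) atTop (𝓝 0) := by
  have hbound (N n : ℕ) (hn : 0 < n ∧ n ≤ σ * N) :
      (c * n + 1) * exp (n * χ (n / N)) ≤ (c * n + 1) * exp (-η * n) := by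
    have hn0 : (0 : ℝ) < n := by exact_mod_cast hn.1
    have hN : (0 : ℝ) < N := hn0.trans_le (hn.2.trans (mul_le_of_le_one_left N.cast_nonneg hσ))
    have hχn := hχ (n / N) ⟨by positivity, (div_le_iff₀ hN).2 hn.2⟩
    rw [mul_comm (-η)]
    exact mul_le_mul_of_nonneg_left (exp_le_exp.2 (by gcongr)) (by positivity)
  have hsummable : Summable fun n : ℕ => (c * n + 1) * exp (-η * n) := by
    simpa [add_mul, mul_assoc] using ((summable_pow_mul_exp_neg_nat_mul 1 hη).mul_left c).add
      (summable_pow_mul_exp_neg_nat_mul 0 hη)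
  have hpointwise (n : ℕ) : Tendsto (fun N : ℕ =>
      if 0 < n ∧ n ≤ σ * N then (c * n + 1) * exp (n * χ (n / N)) else 0) atTop (𝓝 0) := by
    rcases n.eq_zero_or_pos with rfl | hn
    · simp
    have hn0 : (0 : ℝ) < n := by exact_mod_cast hn
    have hdiv : Tendsto (fun N : ℕ => (n : ℝ) / N) atTop (𝓝[>] 0) :=
      tendsto_nhdsWithin_iff.2 ⟨tendsto_const_div_atTop_nhds_zero_nat _, by
        filter_upwards [eventually_gt_atTop 0] with N hN
        exact div_pos hn0 (by exact_mod_cast hN)⟩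
    have hlim := (tendsto_exp_atBot.comp
      ((hχ0.comp hdiv).const_mul_atBot hn0)).const_mul (c * n + 1)
    rw [mul_zero] at hlim
    refine squeeze_zero (fun N => ?_) (fun N => ?_) hlim
    · split_ifs <;> positivity
    · split_ifs
      · rfl
      · simp only [Function.comp_apply]; positivity
  have htannery := tendsto_tsum_of_dominated_convergence hsummable hpointwise
    (.of_forall fun N n => by
      rw [norm_of_nonneg (by split_ifs <;> positivity)]
      split_ifs with hn
      · exact hbound N n hn
      · positivity)
  rw [tsum_zero] at htannery
  refine htannery.congr fun N => tsum_eq_sum fun n hn => if_neg fun h => hn ?_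
  rw [mem_range, Nat.lt_succ_iff, ← Nat.cast_le (α := ℝ)]
  exact h.2.trans (mul_le_of_le_one_left N.cast_nonneg hσ)

open Classical in
theorem card_filter_interedges_le {W : Finset V} {b B : ℝ} (hB0 : 0 ≤ B)
    (hB : ∀ q : ℕ, b ≤ q → #(regularWith d W q) ≤ B) :
    (#{G ∈ regularGraphs V d | b ≤ #(G.interedges W W)} : ℝ) ≤ (d * #W + 1) * B := by
  have hcover : {G ∈ regularGraphs V d | b ≤ #(G.interedges W W)} ⊆
      {q ∈ range (d * #W + 1) | b ≤ (q : ℕ)}.biUnion (regularWith d W) := fun G hG => by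
    obtain ⟨hG, hGW⟩ := mem_filter.1 hG
    rw [mem_regularGraphs] at hG
    have hle : #(G.interedges W W) ≤ d * #W := by
      rw [← card_interedges_univ_right (isRegularGraph_iff_isRegularOfDegree.1 hG) W]
      exact card_le_card (interedges_mono _ subset_rfl (subset_univ W))
    exact mem_biUnion.2 ⟨_, mem_filter.2 ⟨mem_range_succ_iff.2 hle, hGW⟩,
      mem_regularWith.2 ⟨hG, rfl⟩⟩
  calc (#{G ∈ regularGraphs V d | b ≤ #(G.interedges W W)} : ℝ)
      ≤ ∑ q ∈ range (d * #W + 1) with b ≤ (q : ℕ), (#(regularWith d W q) : ℝ) := by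
        exact_mod_cast (card_le_card hcover).trans card_biUnion_le
    _ ≤ #{q ∈ range (d * #W + 1) | b ≤ (q : ℕ)} • B :=
        sum_le_card_nsmul _ _ _ fun q hq => hB q (mem_filter.1 hq).2
    _ ≤ (d * #W + 1) * B := by
        rw [nsmul_eq_mul]
        gcongr
        exact_mod_cast (card_filter_le _ _).trans_eq (card_range _)

open Classical in
theorem choose_mul_card_filter_interedges_le {W : Finset V} {x : ℝ} (hx : x ∈ Set.Ioc 0 σ)
    (hσ : σ < 1) (ht : t ∈ Set.Icc σ 1) (hW : (#W : ℝ) = x * Fintype.card V)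
    (hV : 4 * d ≤ (1 - σ) ^ 2 * Fintype.card V) (hV0 : 0 < Fintype.card V) :
    ((Fintype.card V).choose #W * #{G ∈ regularGraphs V d |
      t * d * #W + 2 ≤ #(G.interedges W W)} : ℝ) ≤
      #(regularGraphs V d) * exp (4 * d ^ 2 / (1 - σ) ^ 2) *
        ((d * #W + 1) * exp (#W * (momentRate d t x / x))) := by
  have hN : (0 : ℝ) < Fintype.card V := by exact_mod_cast hV0
  have hx0 : 0 < x := hx.1
  have hx1 : x < 1 := hx.2.trans_lt hσ
  have : 0 < 1 - σ := sub_pos.2 hσ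
  have hxσ : 1 - σ ≤ 1 - x := sub_le_sub_left hx.2 1
  have hlevel (q : ℕ) (hq : t * d * #W + 2 ≤ q) : (#(regularWith d W q) : ℝ) ≤
      #(regularGraphs V d) * exp (4 * d ^ 2 / (1 - σ) ^ 2 + d * Fintype.card V * entF x t) := by
    refine (card_regularWith_le_mul_exp ⟨hx0, hx1⟩ hW (hV.trans ?_) ⟨hx.2.trans ht.1, ht.2⟩
      (by rwa [← mul_assoc])).trans ?_ <;> gcongr
  have hchoose : ((Fintype.card V).choose #W : ℝ) ≤ exp (Fintype.card V * entHH x) := by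
    rw [← mul_div_cancel_right₀ x hN.ne', ← hW]
    apply choose_le_exp_entHH <;> rify <;> nlinarith
  calc _ ≤ exp (Fintype.card V * entHH x) * ((d * #W + 1) * (#(regularGraphs V d) *
          exp (4 * d ^ 2 / (1 - σ) ^ 2 + d * Fintype.card V * entF x t))) := by
        gcongr
        exact card_filter_interedges_le (by positivity) hlevel
    _ = _ := by
        have hrate : #W * (momentRate d t x / x) =
            Fintype.card V * entHH x + d * Fintype.card V * entF x t := by
          rw [hW, momentRate]
          field_simp
          ring
        rw [hrate, exp_add, exp_add]
        ring

open Classical in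
theorem card_filter_hasDenseSet_le_sum (d : ℕ) (b σ : ℝ) :
    #{G ∈ regularGraphs V d | HasDenseSet G b σ} ≤
      ∑ W : Finset V with 0 < #W ∧ #W ≤ σ * Fintype.card V,
        #{G ∈ regularGraphs V d | b * #W + 2 ≤ #(G.interedges W W)} := by
  refine (card_le_card fun G hG => ?_).trans card_biUnion_le
  obtain ⟨hG, W, hWσ, hGW⟩ := mem_filter.1 hG
  refine mem_biUnion.2 ⟨W, (mem_filter_univ W).2 ⟨?_, hWσ⟩, mem_filter.2 ⟨hG, by convert hGW⟩⟩
  refine card_pos.2 (nonempty_iff_ne_empty.2 ?_)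
  rintro rfl
  simp only [card_empty, interedges, Rel.interedges_empty_left, Nat.cast_zero] at hGW
  linarith

open Classical in
theorem card_filter_hasDenseSet_le (hσ : σ < 1) (ht : t ∈ Set.Icc σ 1)
    (hV : 4 * d ≤ (1 - σ) ^ 2 * Fintype.card V) :
    (#{G ∈ regularGraphs V d | HasDenseSet G (t * d) σ} : ℝ) ≤
      #(regularGraphs V d) * exp (4 * d ^ 2 / (1 - σ) ^ 2) *
        ∑ n ∈ range (Fintype.card V + 1), if 0 < n ∧ n ≤ σ * Fintype.card V then
          (d * n + 1) * exp (n * (momentRate d t (n / Fintype.card V) / (n / Fintype.card V)))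
        else 0 := by
  set u : ℕ → ℝ := fun n => #(regularGraphs V d) * exp (4 * d ^ 2 / (1 - σ) ^ 2) *
    if 0 < n ∧ n ≤ σ * Fintype.card V then
      (d * n + 1) * exp (n * (momentRate d t (n / Fintype.card V) / (n / Fintype.card V)))
    else 0 with hu
  have hchoose (n : ℕ) (hn : n ≤ Fintype.card V) : (0 : ℝ) < (Fintype.card V).choose n := by
    exact_mod_cast Nat.choose_pos hn
  calc (#{G ∈ regularGraphs V d | HasDenseSet G (t * d) σ} : ℝ)
      ≤ ∑ W : Finset V with 0 < #W ∧ #W ≤ σ * Fintype.card V,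
          (#{G ∈ regularGraphs V d | t * d * #W + 2 ≤ #(G.interedges W W)} : ℝ) :=
        mod_cast card_filter_hasDenseSet_le_sum d (t * d) σ
    _ ≤ ∑ W : Finset V with 0 < #W ∧ #W ≤ σ * Fintype.card V,
          u #W / (Fintype.card V).choose #W := by
        refine sum_le_sum fun W hW => ?_
        have hW := (mem_filter.1 hW).2
        have hV0 : 0 < Fintype.card V := hW.1.trans_le (card_le_univ W)
        have hN : (0 : ℝ) < Fintype.card V := by exact_mod_cast hV0
        rw [le_div_iff₀' (hchoose _ (card_le_univ W)), hu]
        simp only [if_pos hW]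
        exact choose_mul_card_filter_interedges_le
          ⟨div_pos (by exact_mod_cast hW.1) hN, (div_le_iff₀ hN).2 hW.2⟩ hσ ht
          (div_mul_cancel₀ _ hN.ne').symm hV hV0
    _ ≤ ∑ W ∈ (univ : Finset V).powerset, u #W / (Fintype.card V).choose #W := by
        rw [powerset_univ]
        exact sum_le_univ_sum_of_nonneg fun W => by positivity
    _ = ∑ n ∈ range (Fintype.card V + 1), u n := by
        rw [sum_powerset_apply_card (fun n => u n / (Fintype.card V).choose n), card_univ]
        refine sum_congr rfl fun n hn => ?_
        rw [nsmul_eq_mul, mul_div_cancel₀ _ (hchoose n (mem_range_succ_iff.1 hn)).ne']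
    _ = _ := (mul_sum _ _ _).symm

open Classical in
theorem eventually_card_filter_hasDenseSet_le (hd : 2 < d) (hσ0 : 0 < σ) (hσ : σ < 1) (ht : t ≤ 1)
    (hσt : 2 * (1 - σ) ≤ d * (t - σ)) (hrate : momentRate d t σ < 0) {δ : ℝ} (hδ : 0 < δ) :
    ∀ᶠ N : ℕ in atTop, (#{G ∈ regularGraphs (Fin N) d | HasDenseSet G (t * d) σ} : ℝ) ≤
      δ * #(regularGraphs (Fin N) d) := by
  have hd' : (2 : ℝ) < d := by exact_mod_cast hd
  have htσ : σ ≤ t := by nlinarith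
  have hmono := monotoneOn_momentRate_div hd'.le hσ hσt
  have hsum := tendsto_sum_mul_exp_nhds_zero d.cast_nonneg hσ.le
    (neg_pos.2 (div_neg_of_neg_of_pos hrate hσ0))
    (fun x hx => (hmono hx ⟨hσ0, le_rfl⟩ hx.2).trans_eq (neg_neg _).symm)
    (tendsto_momentRate_div_atBot (by nlinarith : (2 : ℝ) < d * t))
  have hlim := hsum.const_mul (exp (4 * d ^ 2 / (1 - σ) ^ 2))
  rw [mul_zero] at hlim
  have hlarge : Tendsto (fun N : ℕ => (1 - σ) ^ 2 * (N : ℝ)) atTop atTop :=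
    tendsto_natCast_atTop_atTop.const_mul_atTop (sq_pos_of_pos (sub_pos.2 hσ))
  filter_upwards [hlim.eventually_le_const hδ, hlarge.eventually_ge_atTop (4 * d)] with N hN hV
  have hcard := card_filter_hasDenseSet_le (V := Fin N) hσ ⟨htσ, ht⟩ (by rwa [Fintype.card_fin])
  rw [Fintype.card_fin, mul_assoc] at hcard
  rw [mul_comm δ]
  exact hcard.trans (mul_le_mul_of_nonneg_left hN (Nat.cast_nonneg _))

end FirstMoment

section RandomRegularGraphs

open Real Finset Filter

variable {k s r d : ℕ}

theorem two_mul_mul_entHH_lt_sq {K x d : ℝ} (hx : x ∈ Set.Ioo 0 1) (hK : 0 < K) (hKd : K ≤ d)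
    (h : momentRate d (1 - K * (1 - x) / d) x < 0) : 2 * d * entHH x < (d - K) ^ 2 := by
  have hd : 0 < d := hK.trans_le hKd
  have hx1 : 0 < 1 - x := sub_pos.2 hx.2
  have hratio : K / d ≤ 1 := (div_le_one hd).2 hKd
  have ht : x ≤ 1 - K * (1 - x) / d := by
    rw [mul_div_right_comm]
    nlinarith
  have hF := neg_sq_div_two_le_entF hx ⟨hx.1.le.trans ht, sub_le_self _ (by positivity)⟩
    (one_sub_two_sub_mul_pos hx ht).le
  have hsq : (1 - K * (1 - x) / d - x) / (1 - x) = (d - K) / d := by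
    field_simp
    ring
  rw [hsq] at hF
  have hscaled := mul_le_mul_of_nonneg_left hF (by positivity : 0 ≤ 2 * d ^ 2)
  have hcancel : 2 * d ^ 2 * (-((d - K) / d) ^ 2 / 2) = -(d - K) ^ 2 := by field_simp
  rw [momentRate] at h
  nlinarith

theorem two_mul_add_two_le_of_momentRate_neg (hs : 1 ≤ s) (hr0 : 0 < r) (hr : r < 2 * k)
    (hd : d = 2 * s * k + r)
    (hrate : momentRate d ((d - 2 * k + r) / d) (r / (2 * k)) < 0) : 2 * k + 2 ≤ d := by
  by_contra! hlt
  have hsk : k ≤ s * k := Nat.le_mul_of_pos_left k hs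
  obtain ⟨rfl, rfl⟩ : r = 1 ∧ d = 2 * k + 1 := by constructor <;> nlinarith
  have hk : (1 : ℝ) ≤ k := by exact_mod_cast (by lia : 1 ≤ k)
  have hx : 1 / (2 * k : ℝ) ≤ 1 / 2 := by gcongr; linarith
  have hx0 : 0 < 1 / (2 * k : ℝ) := by positivity
  have ht : ((2 * k + 1 : ℕ) - 2 * k + (1 : ℕ) : ℝ) / (2 * k + 1 : ℕ) =
      1 - 2 * k * (1 - 1 / (2 * k)) / (2 * k + 1 : ℕ) := by
    field_simp
    ring
  rw [ht, Nat.cast_one] at hrate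
  have hlt := two_mul_mul_entHH_lt_sq ⟨hx0, by linarith⟩ (by positivity) (by push_cast; linarith)
    hrate
  push_cast at hlt
  have hlog : 1 / 2 < log 2 := by linarith [log_two_gt_d9]
  have hH := mul_log_two_le_entHH hx0 hx
  have : 1 / (2 * (k : ℝ)) * (2 * k) = 1 := by field_simp
  nlinarith

open Classical in
theorem card_regularGraphs_le_card_hasStarDecomp_add {V : Type*} [Fintype V] [DecidableEq V]
    (hk : 0 < k) (hd : d = 2 * s * k + r) :
    #(regularGraphs V d) ≤
      Nat.card {G : SimpleGraph V // IsRegularGraph G d ∧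
        ∀ A : Finset V, #A * (2 * k) = r * Fintype.card V →
          HasStarDecomp G k fun v => if v ∈ A then s + 1 else s} +
      (#{G ∈ regularGraphs V d | HasDenseSet G (d - 2 * k + r) (r / (2 * k))} +
        #{G ∈ regularGraphs V d | HasDenseSet G (d - r) (1 - r / (2 * k))}) := by
  rw [Nat.subtype_card {G ∈ regularGraphs V d | ∀ A : Finset V, #A * (2 * k) = r * Fintype.card V →
    HasStarDecomp G k fun v => if v ∈ A then s + 1 else s} fun G => by
      rw [mem_filter, mem_regularGraphs]]
  refine le_trans (card_le_card fun G hG => ?_)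
    ((card_union_le _ _).trans (Nat.add_le_add_left (card_union_le _ _) _))
  simp only [mem_union, mem_filter, hG, true_and]
  by_contra! hbad
  obtain ⟨⟨A, hA, hGA⟩, hsmall, hlarge⟩ := hbad
  exact hGA (hasStarDecomp_of_not_hasDenseSet hk hd (mem_regularGraphs.1 hG) hsmall hlarge hA)

open Classical in
theorem eventually_card_filter_hasDenseSet_add_le (hs : 1 ≤ s) (hr0 : 0 < r) (hr : r < 2 * k)
    (hd : d = 2 * s * k + r)
    (hrate : momentRate d ((d - 2 * k + r) / d) (r / (2 * k)) < 0) {δ : ℝ} (hδ : 0 < δ) :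
    ∀ᶠ N : ℕ in atTop,
      (#{G ∈ regularGraphs (Fin N) d | HasDenseSet G (d - 2 * k + r) (r / (2 * k))} +
        #{G ∈ regularGraphs (Fin N) d | HasDenseSet G (d - r) (1 - r / (2 * k))} : ℝ) ≤
      δ * #(regularGraphs (Fin N) d) := by
  have hkd : (2 * k + 2 : ℝ) ≤ d := by
    exact_mod_cast two_mul_add_two_le_of_momentRate_neg hs hr0 hr hd hrate
  have hr0' : (0 : ℝ) < r := by exact_mod_cast hr0
  have hr' : (r : ℝ) < 2 * k := by exact_mod_cast hr
  have hd0 : (0 : ℝ) < d := by linarith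
  have hd2 : 2 < d := by rify; linarith
  have hρ0 : (0 : ℝ) < r / (2 * k) := div_pos hr0' (by linarith)
  have hρ1 : (r : ℝ) / (2 * k) < 1 := (div_lt_one (by linarith)).2 hr'
  have hρ : (r : ℝ) = 2 * k * (r / (2 * k)) := (mul_div_cancel₀ _ (hr0'.trans hr').ne').symm
  have hgap : 2 * (1 - r / (2 * k)) ≤ (d * ((d - 2 * k + r) / d - r / (2 * k)) : ℝ) := by
    rw [mul_sub (d : ℝ), mul_div_cancel₀ _ hd0.ne']
    nlinarith
  have hgap' : 2 * (1 - (1 - r / (2 * k))) ≤ (d * ((d - r) / d - (1 - r / (2 * k))) : ℝ) := by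
    rw [mul_sub (d : ℝ), mul_div_cancel₀ _ hd0.ne']
    nlinarith
  have hsmall := eventually_card_filter_hasDenseSet_le hd2 hρ0 hρ1
    ((div_le_one hd0).2 (by linarith)) hgap hrate (half_pos hδ)
  have hdual : momentRate d ((d - r) / d) (1 - r / (2 * k)) < 0 := by
    rwa [momentRate_one_sub (t := (d - 2 * k + r) / d)]
    have hk0 : (k : ℝ) ≠ 0 := by linarith
    field_simp
    ring
  have hlarge := eventually_card_filter_hasDenseSet_le hd2 (sub_pos.2 hρ1) (sub_lt_self 1 hρ0)
    ((div_le_one hd0).2 (by linarith)) hgap' hdual (half_pos hδ)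
  filter_upwards [hsmall, hlarge] with N hsmallN hlargeN
  rw [div_mul_cancel₀ _ hd0.ne'] at hsmallN hlargeN
  linarith

end RandomRegularGraphs

theorem stmt_14 (k s r d : ℕ) (hk : 2 ≤ k) (hs : 1 ≤ s) (hr0 : 0 < r) (hr : r < 2 * k)
    (hd : d = 2 * s * k + r)
    (hcond : (d : ℝ) * entF ((r : ℝ) / (2 * k)) (((d : ℝ) - 2 * k + r) / d)
        + entHH ((r : ℝ) / (2 * k)) < 0)
    (δ : ℝ) (hδ : 0 < δ) :
    ∃ N₀ : ℕ, ∀ N : ℕ, N₀ ≤ N → 2 * k ∣ N * d →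
      (1 - δ) * (Nat.card {G : SimpleGraph (Fin N) // IsRegularGraph G d} : ℝ) ≤
        (Nat.card {G : SimpleGraph (Fin N) // IsRegularGraph G d ∧
          ∀ A : Finset (Fin N), A.card * (2 * k) = r * N →
            HasStarDecomp G k (fun v => if v ∈ A then s + 1 else s)} : ℝ) := by
  classical
  obtain ⟨N₀, hN₀⟩ := Filter.eventually_atTop.1
    (eventually_card_filter_hasDenseSet_add_le hs hr0 hr hd hcond hδ)
  refine ⟨N₀, fun N hN _ => ?_⟩
  have hsplit := Nat.cast_le (α := ℝ).2
    (card_regularGraphs_le_card_hasStarDecomp_add (V := Fin N) (k := k) (by lia) hd)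
  have hdense := hN₀ N hN
  rw [Nat.subtype_card (regularGraphs (Fin N) d) fun _ => mem_regularGraphs]
  rw [Nat.cast_add, Nat.cast_add, Fintype.card_fin] at hsplit
  linarith
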